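/- One has ( Σ_{k₀=1}^{∞} Σ_{k₁=1}^{∞} 3·k₀·k₁·Ω'(1, k₀, k₁, 1) − (3/2)² ) / (6e − 63/4) = (2e² − 8e + 7)/(8e − 21), where e is Euler's number. (This is the correlation corr(μ₀, μ₁) ≈ 0.0427 of two consecutive inter-extremum distances μ₀, μ₁, where E[μ₀μ₁] = Σ_{k₀,k₁} 3k₀k₁Ω'(1,k₀,k₁,1), E μ₀ = E μ₁ = 3/2 and Var μ₀ = Var μ₁ = 6e − 63/4.) -/

import Mathlib

/-- The monotonicity condition: for the list of block lengths `a`, a permutation `τ` of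
`{0, …, a.sum}` must increase on the `k`-th block for even `k` (0-indexed, i.e. odd blocks
in 1-indexed counting) and decrease on the `k`-th block for odd `k`. -/
def MonotCond (a : List ℕ) (τ : Equiv.Perm (Fin (a.sum + 1))) : Prop :=
  ∀ k, k < a.length →
    ∀ j, (a.take k).sum ≤ j → j < (a.take (k + 1)).sum →
      ∀ h : j + 1 < a.sum + 1,
        if k % 2 = 0
        then τ ⟨j, Nat.lt_of_succ_lt h⟩ < τ ⟨j + 1, h⟩
        else τ ⟨j + 1, h⟩ < τ ⟨j, Nat.lt_of_succ_lt h⟩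

/-- `Omega a` is the number of permutations of `{0, …, a.sum}` with the prescribed
alternating monotonicity pattern given by the block lengths in `a`. -/
noncomputable def Omega (a : List ℕ) : ℕ :=
  Nat.card {τ : Equiv.Perm (Fin (a.sum + 1)) // MonotCond a τ}

/-- The normalized quantity `Ω'(a) = Ω(a) / (N + 1)!` where `N = a.sum`. -/
noncomputable def Omega' (a : List ℕ) : ℝ :=
  (Omega a : ℝ) / (Nat.factorial (a.sum + 1))

open Classical in
noncomputable def cnt {n : ℕ} (P : Equiv.Perm (Fin n) → Prop) : ℕ :=
  (Finset.univ.filter P).card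

def pv {n : ℕ} (τ : Equiv.Perm (Fin n)) (j : ℕ) : ℕ := if h : j < n then (τ ⟨j, h⟩ : ℕ) else 0

def Up {n : ℕ} (τ : Equiv.Perm (Fin n)) (s k : ℕ) : Prop :=
  ∀ j, s ≤ j → j < s + k → pv τ j < pv τ (j + 1)

def Dn {n : ℕ} (τ : Equiv.Perm (Fin n)) (s k : ℕ) : Prop :=
  ∀ j, s ≤ j → j < s + k → pv τ (j + 1) < pv τ j

lemma pv_ne {n : ℕ} (τ : Equiv.Perm (Fin n)) (i j : ℕ) (hi : i < n) (hj : j < n) (hij : i ≠ j) :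
    pv τ i ≠ pv τ j := by
  unfold pv
  rw [dif_pos hi, dif_pos hj]
  intro h
  have := τ.injective (Fin.ext h)
  simp at this
  exact hij this

lemma cnt_split {n : ℕ} (P Q R : Equiv.Perm (Fin n) → Prop) (h : ∀ τ, P τ ↔ (Q τ ∨ R τ))
    (hd : ∀ τ, ¬ (Q τ ∧ R τ)) : cnt P = cnt Q + cnt R := by
  classical
  unfold cnt
  rw [← Finset.card_union_of_disjoint]
  · congr 1
    ext τ
    simp [h]
  · rw [Finset.disjoint_filter]
    intro τ _ h1 h2
    exact hd τ ⟨h1, h2⟩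

lemma unique_mono {n a : ℕ} (g : Fin a → Fin n) (hg : Function.Injective g) :
    ∃! σ : Equiv.Perm (Fin a), StrictMono (g ∘ σ) := by
  refine ⟨Tuple.sort g, ?_, ?_⟩
  · exact (Tuple.monotone_sort g).strictMono_of_injective (hg.comp (Tuple.sort g).injective)
  · intro σ hσ
    have := Tuple.unique_monotone (f := g) hσ.monotone (Tuple.monotone_sort g)
    ext i
    have := congrFun this i
    exact congrArg _ (hg this)

lemma unique_anti {n a : ℕ} (g : Fin a → Fin n) (hg : Function.Injective g) :
    ∃! σ : Equiv.Perm (Fin a), StrictAnti (g ∘ σ) := by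
  have := unique_mono (fun i => Fin.rev (g i)) (Fin.rev_injective.comp hg)
  convert this using 3 with σ
  constructor
  · intro h i j hij
    simpa using h hij
  · intro h i j hij
    simpa using h hij

lemma cnt_sort {n a b : ℕ} (e : Fin a ⊕ Fin b ↪ Fin n) :
    cnt (fun τ : Equiv.Perm (Fin n) => StrictAnti (fun i => τ (e (Sum.inl i))) ∧
      StrictMono (fun i => τ (e (Sum.inr i)))) * (a.factorial * b.factorial) = n.factorial := by
  classical
  set P := (fun τ : Equiv.Perm (Fin n) => StrictAnti (fun i => τ (e (Sum.inl i))) ∧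
      StrictMono (fun i => τ (e (Sum.inr i)))) with hP
  clear_value P
  let v : Equiv.Perm (Fin a) × Equiv.Perm (Fin b) → Equiv.Perm (Fin n) :=
    fun σ => (Equiv.Perm.sumCongr σ.1 σ.2).viaEmbedding e
  have key : ∑ σ : Equiv.Perm (Fin a) × Equiv.Perm (Fin b),
      ∑ τ : Equiv.Perm (Fin n), (if P (τ * v σ) then 1 else 0) =
      ∑ τ : Equiv.Perm (Fin n), ∑ σ : Equiv.Perm (Fin a) × Equiv.Perm (Fin b),
        (if P (τ * v σ) then 1 else 0) := Finset.sum_comm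
  have h1 : ∀ σ : Equiv.Perm (Fin a) × Equiv.Perm (Fin b),
      ∑ τ : Equiv.Perm (Fin n), (if P (τ * v σ) then 1 else 0) = cnt P := by
    intro σ
    have h := Equiv.sum_comp (Equiv.mulRight (v σ)) (fun τ => if P τ then 1 else 0)
    refine h.trans ?_
    simp [cnt]
  have h2 : ∀ τ : Equiv.Perm (Fin n), ∑ σ : Equiv.Perm (Fin a) × Equiv.Perm (Fin b),
        (if P (τ * v σ) then 1 else 0) = 1 := by
    intro τ
    obtain ⟨σ1, h1, u1⟩ := unique_anti (fun i => τ (e (Sum.inl i)))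
      (τ.injective.comp (e.injective.comp Sum.inl_injective))
    obtain ⟨σ2, h2, u2⟩ := unique_mono (fun i => τ (e (Sum.inr i)))
      (τ.injective.comp (e.injective.comp Sum.inr_injective))
    have hv : ∀ σ, P (τ * v σ) ↔ σ = (σ1, σ2) := by
      intro σ
      have : P (τ * v σ) ↔ (StrictAnti ((fun i => τ (e (Sum.inl i))) ∘ σ.1) ∧
          StrictMono ((fun i => τ (e (Sum.inr i))) ∘ σ.2)) := by
        simp only [hP, v, Equiv.Perm.mul_apply, Equiv.Perm.viaEmbedding_apply]
        rfl
      rw [this]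
      constructor
      · rintro ⟨q1, q2⟩
        exact Prod.ext (u1 _ q1) (u2 _ q2)
      · rintro rfl
        exact ⟨h1, h2⟩
    simp [hv]
  simp only [h1, h2] at key
  simp [Fintype.card_perm] at key
  rw [← key]; ring

lemma anti_iff {n : ℕ} (τ : Equiv.Perm (Fin n)) (s k : ℕ) (f : Fin (k+1) → Fin n)
    (hf : ∀ i, (f i : ℕ) = s + i) : StrictAnti (fun i => τ (f i)) ↔ Dn τ s k := by
  have hp : ∀ i, pv τ (s + (i : Fin (k+1))) = (τ (f i) : ℕ) := by
    intro i
    have := (f i).isLt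
    unfold pv
    rw [dif_pos (by rw [← hf]; exact this)]
    congr 2
    exact Fin.ext (hf i).symm
  rw [Fin.strictAnti_iff_succ_lt]
  constructor
  · intro h j h1 h2
    have := h ⟨j - s, by omega⟩
    rw [Fin.lt_def, ← hp, ← hp] at this
    simp at this
    convert this using 2 <;> omega
  · intro h i
    rw [Fin.lt_def, ← hp, ← hp]
    have := h (s + i) (by omega) (by omega)
    simpa [add_assoc] using this

lemma mono_iff {n : ℕ} (τ : Equiv.Perm (Fin n)) (s k : ℕ) (f : Fin (k+1) → Fin n)
    (hf : ∀ i, (f i : ℕ) = s + i) : StrictMono (fun i => τ (f i)) ↔ Up τ s k := by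
  have hp : ∀ i, pv τ (s + (i : Fin (k+1))) = (τ (f i) : ℕ) := by
    intro i
    have := (f i).isLt
    unfold pv
    rw [dif_pos (by rw [← hf]; exact this)]
    congr 2
    exact Fin.ext (hf i).symm
  rw [Fin.strictMono_iff_lt_succ]
  constructor
  · intro h j h1 h2
    have := h ⟨j - s, by omega⟩
    rw [Fin.lt_def, ← hp, ← hp] at this
    simp at this
    convert this using 2 <;> omega
  · intro h i
    rw [Fin.lt_def, ← hp, ← hp]
    have := h (s + i) (by omega) (by omega)
    simpa [add_assoc] using this

def win (n s a b : ℕ) (h : s + a + b ≤ n) : Fin a ⊕ Fin b ↪ Fin n where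
  toFun := Sum.elim (fun i => ⟨s + i, by omega⟩) (fun i => ⟨s + a + i, by omega⟩)
  inj' := by
    rintro (i | i) (j | j) hij <;> simp [Fin.ext_iff] at hij ⊢ <;> omega

noncomputable def W (n s k l : ℕ) : ℕ :=
  cnt (fun τ : Equiv.Perm (Fin n) => Dn τ s k ∧ Up τ (s + k) l)

lemma W_zero (n s k : ℕ) (h : s + k < n) : W n s k 0 * (k+1).factorial = n.factorial := by
  have := cnt_sort (win n s (k+1) 0 (by omega))
  rw [← this]
  simp only [Nat.factorial_zero, mul_one]
  congr 2
  unfold W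
  congr 1
  funext τ
  rw [anti_iff τ s k _ (fun i => rfl)]
  simp only [eq_iff_iff]
  refine and_congr Iff.rfl ?_
  constructor
  · intro _ i
    exact i.elim0
  · intro _ j h1 h2
    omega

lemma W_succ (n s k l : ℕ) (h : s + k + l + 1 < n) :
    (W n s k (l+1) + W n s (k+1) l) * ((k+1).factorial * (l+1).factorial) = n.factorial := by
  have := cnt_sort (win n s (k+1) (l+1) (by omega))
  rw [← this]
  congr 1
  unfold W
  symm
  apply cnt_split
  · intro τ
    rw [anti_iff τ s k _ (fun i => rfl), mono_iff τ (s+(k+1)) l _ (fun i => rfl)]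
    have hne := pv_ne τ (s+k) (s+k+1) (by omega) (by omega) (by omega)
    constructor
    · rintro ⟨h1, h2⟩
      rcases lt_or_gt_of_ne hne with hl | hl
      · left
        refine ⟨h1, fun j a b => ?_⟩
        rcases eq_or_lt_of_le a with rfl | a
        · exact hl
        · exact h2 j (by omega) (by omega)
      · right
        refine ⟨fun j a b => ?_, h2⟩
        by_cases hj : j = s + k
        · subst hj; exact hl
        · exact h1 j (by omega) (by omega)
    · rintro (⟨h1, h2⟩ | ⟨h1, h2⟩)
      · exact ⟨h1, fun j a b => h2 j (by omega) (by omega)⟩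
      · exact ⟨fun j a b => h1 j (by omega) (by omega), h2⟩
  · rintro τ ⟨⟨_, h1⟩, ⟨h2, _⟩⟩
    have := h1 (s+k) (by omega) (by omega)
    have := h2 (s+k) (by omega) (by omega)
    omega

noncomputable def V (k l : ℕ) : ℝ := 1 / (k.factorial * l.factorial * (k + l + 1))

lemma W_eq (n s l : ℕ) : ∀ k, s + k + l < n → (W n s k l : ℝ) = n.factorial * V k l := by
  induction l with
  | zero =>
    intro k h
    have := W_zero n s k (by omega)
    rw [← this, V, Nat.factorial_succ]
    have := Nat.factorial_ne_zero k
    push_cast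
    field_simp
    simp
  | succ l ih =>
    intro k h
    have h1 := W_succ n s k l (by omega)
    have h2 := ih (k+1) (by omega)
    have h1' : ((W n s k (l+1) : ℝ) + W n s (k+1) l) * ((k+1).factorial * (l+1).factorial)
      = n.factorial := by exact_mod_cast h1
    rw [h2] at h1'
    have e1 : (W n s k (l+1) : ℝ) = n.factorial / ((k+1).factorial * (l+1).factorial)
       - n.factorial * V (k+1) l := by
      rw [eq_sub_iff_add_eq, eq_div_iff (by positivity)]
      exact h1'
    rw [e1]
    simp only [V, Nat.factorial_succ]
    have := Nat.factorial_ne_zero k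
    have := Nat.factorial_ne_zero l
    push_cast
    have : (k:ℝ) + 1 + l + 1 ≠ 0 := by positivity
    have : (k:ℝ) + (l + 1) + 1 ≠ 0 := by positivity
    field_simp
    ring

lemma full_count (n k l : ℕ) (h : n = k + l + 3) :
    cnt (fun τ : Equiv.Perm (Fin n) => Up τ 0 1 ∧ Dn τ 1 k ∧ Up τ (1+k) l ∧ Dn τ (1+k+l) 1)
      + W n 0 (k+1) l + W n 1 k (l+1) = W n 1 k l + W n 0 (k+1) (l+1) := by
  have hX : ∀ l', l' ≤ l + 1 → W n 1 k l' =
      cnt (fun τ : Equiv.Perm (Fin n) => Up τ 0 1 ∧ Dn τ 1 k ∧ Up τ (1+k) l') + W n 0 (k+1) l' := by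
    intro l' hl'
    apply cnt_split
    · intro τ
      have hne := pv_ne τ 0 1 (by omega) (by omega) (by omega)
      rw [show 0 + (k+1) = 1 + k by omega]
      constructor
      · rintro ⟨h1, h2⟩
        rcases lt_or_gt_of_ne hne with hl | hl
        · left
          refine ⟨fun j a b => ?_, h1, h2⟩
          obtain rfl : j = 0 := by omega
          exact hl
        · right
          refine ⟨fun j a b => ?_, h2⟩
          by_cases hj : j = 0
          · subst hj; exact hl
          · exact h1 j (by omega) (by omega)
      · rintro (⟨_, h1, h2⟩ | ⟨h1, h2⟩)
        · exact ⟨h1, h2⟩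
        · exact ⟨fun j a b => h1 j (by omega) (by omega), h2⟩
    · rintro τ ⟨⟨h1, _⟩, ⟨h2, _⟩⟩
      have := h1 0 (by omega) (by omega)
      have := h2 0 (by omega) (by omega)
      omega
  have h1 := hX l (by omega)
  have h2 := hX (l+1) (by omega)
  have h3 : cnt (fun τ : Equiv.Perm (Fin n) => Up τ 0 1 ∧ Dn τ 1 k ∧ Up τ (1+k) l) =
      cnt (fun τ : Equiv.Perm (Fin n) => Up τ 0 1 ∧ Dn τ 1 k ∧ Up τ (1+k) l ∧ Dn τ (1+k+l) 1) +
      cnt (fun τ : Equiv.Perm (Fin n) => Up τ 0 1 ∧ Dn τ 1 k ∧ Up τ (1+k) (l+1)) := by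
    apply cnt_split
    · intro τ
      have hne := pv_ne τ (1+k+l) (1+k+l+1) (by omega) (by omega) (by omega)
      constructor
      · rintro ⟨h0, h1, h2⟩
        rcases lt_or_gt_of_ne hne with hl | hl
        · right
          refine ⟨h0, h1, fun j a b => ?_⟩
          by_cases hj : j = 1+k+l
          · subst hj; exact hl
          · exact h2 j (by omega) (by omega)
        · left
          refine ⟨h0, h1, h2, fun j a b => ?_⟩
          obtain rfl : j = 1+k+l := by omega
          exact hl
      · rintro (⟨h0, h1, h2, _⟩ | ⟨h0, h1, h2⟩)
        · exact ⟨h0, h1, h2⟩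
        · exact ⟨h0, h1, fun j a b => h2 j (by omega) (by omega)⟩
    · rintro τ ⟨⟨_, _, _, h1⟩, ⟨_, _, h2⟩⟩
      have := h1 (1+k+l) (by omega) (by omega)
      have := h2 (1+k+l) (by omega) (by omega)
      omega
  omega

lemma monot_iff (k l : ℕ) (τ : Equiv.Perm (Fin ([1, k, l, 1].sum + 1))) :
    MonotCond [1, k, l, 1] τ ↔ (Up τ 0 1 ∧ Dn τ 1 k ∧ Up τ (1+k) l ∧ Dn τ (1+k+l) 1) := by
  have hs : [1, k, l, 1].sum = 1 + k + l + 1 := by simp; omega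
  have hp : ∀ j (h : j < [1, k, l, 1].sum + 1), pv τ j = (τ ⟨j, h⟩ : ℕ) := by
    intro j h; unfold pv; rw [dif_pos h]
  unfold MonotCond
  simp only [Fin.lt_def, ← hp]
  constructor
  · intro H
    refine ⟨fun j a b => ?_, fun j a b => ?_, fun j a b => ?_, fun j a b => ?_⟩
    · simpa using H 0 (by simp) j (by simp) (by simp; omega) (by omega)
    · simpa using H 1 (by simp) j (by simp; omega) (by simp; omega) (by omega)
    · simpa using H 2 (by simp) j (by simp; omega) (by simp; omega) (by omega)
    · simpa using H 3 (by simp) j (by simp; omega) (by simp; omega) (by omega)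
  · rintro ⟨h0, h1, h2, h3⟩ m hm j a b h
    simp at hm
    interval_cases m
    · simp at a b ⊢; exact h0 j (by omega) (by omega)
    · simp at a b ⊢; exact h1 j (by omega) (by omega)
    · simp at a b ⊢; exact h2 j (by omega) (by omega)
    · simp at a b ⊢; exact h3 j (by omega) (by omega)

lemma Omega'_eq (k l : ℕ) : Omega' [1, k, l, 1] =
    V k l - V (k+1) l - V k (l+1) + V (k+1) (l+1) := by
  have hs : [1, k, l, 1].sum + 1 = k + l + 3 := by simp; omega
  have hO : Omega [1, k, l, 1] = cnt (fun τ : Equiv.Perm (Fin ([1, k, l, 1].sum + 1)) =>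
      Up τ 0 1 ∧ Dn τ 1 k ∧ Up τ (1+k) l ∧ Dn τ (1+k+l) 1) := by
    classical
    unfold Omega cnt
    rw [Nat.card_eq_fintype_card, Fintype.card_subtype]
    congr 1
    ext τ
    simp only [Finset.mem_filter, Finset.mem_univ, true_and]
    exact monot_iff k l τ
  unfold Omega'
  rw [hO]
  generalize [1, k, l, 1].sum + 1 = n at *
  have hc := full_count n k l hs
  have hc' := congrArg (Nat.cast (R := ℝ)) hc
  push_cast at hc'
  rw [W_eq n 0 l _ (by omega), W_eq n 1 _ _ (by omega), W_eq n 1 _ _ (by omega),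
    W_eq n 0 _ _ (by omega)] at hc'
  rw [div_eq_iff (by positivity)]
  linarith

lemma hs_congr {ι : Type} {f g : ι → ℝ} {a b : ℝ} (h : HasSum f a) (hfg : ∀ i, g i = f i)
    (hab : b = a) : HasSum g b := by
  obtain rfl : g = f := funext hfg
  rw [hab]
  exact h

lemma V_nonneg (k l : ℕ) : 0 ≤ V k l := by unfold V; positivity

lemma V_le (k l : ℕ) : V k l ≤ 1 / k.factorial * (1 / l.factorial) := by
  unfold V
  rw [← one_div_mul_one_div_rev, mul_comm, ← one_div_mul_one_div_rev, mul_comm (1 / (l.factorial : ℝ))]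
  apply mul_le_of_le_one_right (by positivity)
  rw [div_le_one (by positivity)]
  have : (0:ℝ) ≤ k + l := by positivity
  linarith

lemma hasSum_exp' (x : ℝ) : HasSum (fun n : ℕ => x ^ n / n.factorial) (Real.exp x) := by
  rw [Real.exp_eq_exp_ℝ]
  exact NormedSpace.expSeries_div_hasSum_exp x

lemma summable_H (f g : ℕ → ℝ) (hf : ∀ i : ℕ, 0 ≤ f i ∧ f i ≤ i + 1)
    (hg : ∀ i : ℕ, 0 ≤ g i ∧ g i ≤ i + 1) :
    Summable (fun p : ℕ × ℕ => f p.1 * g p.2 * V (p.1 + 1) (p.2 + 1)) := by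
  have h1 : Summable (fun n : ℕ => 1 / (n.factorial : ℝ)) := by
    simpa using (hasSum_exp' 1).summable
  have h2 := h1.mul_of_nonneg h1 (fun n => by positivity) (fun n => by positivity)
  refine Summable.of_nonneg_of_le (fun p => ?_) (fun p => ?_) h2
  · exact mul_nonneg (mul_nonneg (hf _).1 (hg _).1) (V_nonneg _ _)
  · obtain ⟨i, j⟩ := p
    simp only
    calc f i * g j * V (i+1) (j+1) ≤ ((i + 1) * (j + 1)) *
          (1 / (i+1).factorial * (1 / (j+1).factorial)) := by
          apply mul_le_mul _ (V_le _ _) (V_nonneg _ _) (by positivity)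
          exact mul_le_mul (hf i).2 (hg j).2 (hg j).1 (by positivity)
      _ = 1 / i.factorial * (1 / j.factorial) := by
          simp only [Nat.factorial_succ]
          push_cast
          field_simp

lemma u_antidiag (m : ℕ) : ∑ p ∈ Finset.HasAntidiagonal.antidiagonal m, V (p.1 + 1) (p.2 + 1) =
    (2 ^ (m + 2) - 2) / (m + 3).factorial := by
  have h : ∀ p ∈ Finset.HasAntidiagonal.antidiagonal m, V (p.1 + 1) (p.2 + 1) =
      ((m + 2).choose (p.1 + 1) : ℝ) / (m + 3).factorial := by
    rintro ⟨i, j⟩ hp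
    rw [Finset.HasAntidiagonal.mem_antidiagonal] at hp
    simp only at hp ⊢
    subst hp
    rw [show i + j + 2 = (i + 1) + (j + 1) by ring, Nat.cast_add_choose, V,
      Nat.factorial_succ (i + j + 2), show i + j + 2 = (i + 1) + (j + 1) by ring]
    push_cast
    field_simp
  rw [Finset.sum_congr rfl h, ← Finset.sum_div,
    Finset.Nat.sum_antidiagonal_eq_sum_range_succ_mk]
  congr 1
  have := Nat.sum_range_choose (m + 2)
  rw [Finset.sum_range_succ, Finset.sum_range_succ'] at this
  simp at this
  have h' := congrArg (Nat.cast (R := ℝ)) this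
  push_cast at h'
  simp only [Nat.succ_eq_add_one]
  linarith

lemma hasSum_u : HasSum (fun p : ℕ × ℕ => V (p.1 + 1) (p.2 + 1))
    (Real.exp 1 ^ 2 / 2 - 2 * Real.exp 1 + 5 / 2) := by
  have hs : Summable (fun p : ℕ × ℕ => V (p.1 + 1) (p.2 + 1)) := by
    have := summable_H (fun _ => 1) (fun _ => 1) (fun i => by simp) (fun i => by simp)
    simpa using this
  have h1 := hs.hasSum
  have h2 := (Finset.HasAntidiagonal.sigmaAntidiagonalEquivProd.hasSum_iff).2 h1
  have h3 := h2.sigma (g := fun m : ℕ => (2 ^ (m + 2) - 2 : ℝ) / (m + 3).factorial) (fun m => by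
    rw [← u_antidiag, ← Finset.sum_coe_sort]
    exact hasSum_fintype _)
  have e2 := ((hasSum_nat_add_iff' 3).2 (hasSum_exp' 2)).mul_left (1/2)
  have e1 := ((hasSum_nat_add_iff' 3).2 (hasSum_exp' 1)).mul_left 2
  have h4 := e2.sub e1
  have h5 : HasSum (fun m : ℕ => (2 ^ (m + 2) - 2 : ℝ) / (m + 3).factorial)
      (Real.exp 1 ^ 2 / 2 - 2 * Real.exp 1 + 5 / 2) := by
    refine hs_congr h4 (fun m => ?_) ?_
    · simp only [one_pow]
      ring
    · simp only [Finset.sum_range_succ, Finset.sum_range_zero, Nat.factorial]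
      have : Real.exp 2 = Real.exp 1 * Real.exp 1 := by
        rw [← Real.exp_add]; norm_num
      norm_num
      linarith
  rw [h3.unique h5] at h1
  exact h1

lemma hasSum_main : HasSum (fun p : ℕ × ℕ => ((p.1 : ℝ) + 1) * ((p.2 : ℝ) + 1) *
    Omega' [1, p.1 + 1, p.2 + 1, 1]) (Real.exp 1 ^ 2 / 2 - 2 * Real.exp 1 + 5 / 2) := by
  let A : ℕ → ℝ := fun i => (i : ℝ) + 1
  let B : ℕ → ℝ := fun i => (i : ℝ)
  have hA : ∀ i : ℕ, 0 ≤ A i ∧ A i ≤ i + 1 := fun i => ⟨by positivity, le_rfl⟩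
  have hB : ∀ i : ℕ, 0 ≤ B i ∧ B i ≤ i + 1 := fun i => ⟨by positivity, by simp [B]⟩
  have h00 := (summable_H A A hA hA).hasSum
  have h10 := (summable_H B A hB hA).hasSum
  have h01 := (summable_H A B hA hB).hasSum
  have h11 := (summable_H B B hB hB).hasSum
  have tot := ((h00.sub h10).sub h01).add h11
  have tot' := tot.unique (by
    refine hs_congr hasSum_u (fun p => ?_) rfl
    simp only [A, B]
    ring)
  have i10 : Function.Injective (fun p : ℕ × ℕ => (p.1 + 1, p.2)) := by
    rintro ⟨a, b⟩ ⟨c, d⟩ h; simpa using h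
  have i01 : Function.Injective (fun p : ℕ × ℕ => (p.1, p.2 + 1)) := by
    rintro ⟨a, b⟩ ⟨c, d⟩ h; simpa using h
  have i11 : Function.Injective (fun p : ℕ × ℕ => (p.1 + 1, p.2 + 1)) := by
    rintro ⟨a, b⟩ ⟨c, d⟩ h; simpa using h
  rw [← i10.hasSum_iff] at h10
  rotate_left
  · rintro ⟨a, b⟩ h
    have : a = 0 := by
      by_contra ha
      exact h ⟨(a - 1, b), by simp; omega⟩
    simp [B, this]
  rw [← i01.hasSum_iff] at h01
  rotate_left
  · rintro ⟨a, b⟩ h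
    have : b = 0 := by
      by_contra ha
      exact h ⟨(a, b - 1), by simp; omega⟩
    simp [B, this]
  rw [← i11.hasSum_iff] at h11
  rotate_left
  · rintro ⟨a, b⟩ h
    have : a = 0 ∨ b = 0 := by
      by_contra ha
      exact h ⟨(a - 1, b - 1), by simp; omega⟩
    rcases this with this | this <;> simp [B, this]
  have fin := ((h00.sub h10).sub h01).add h11
  rw [tot'] at fin
  refine hs_congr fin (fun p => ?_) rfl
  rw [Omega'_eq]
  simp only [A, B, Function.comp]
  push_cast
  ring

theorem stmt_16 :
    ((∑' p : ℕ+ × ℕ+, 3 * (p.1 : ℝ) * (p.2 : ℝ) * Omega' [1, (p.1 : ℕ), (p.2 : ℕ), 1]) -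
          (3 / 2) ^ 2) /
        (6 * Real.exp 1 - 63 / 4) =
      (2 * Real.exp 1 ^ 2 - 8 * Real.exp 1 + 7) / (8 * Real.exp 1 - 21) := by
  have h := hasSum_main.mul_left 3
  have h2 := ((Equiv.prodCongr Equiv.pnatEquivNat Equiv.pnatEquivNat).hasSum_iff).2 h
  have h3 : HasSum (fun p : ℕ+ × ℕ+ => 3 * (p.1 : ℝ) * (p.2 : ℝ) *
      Omega' [1, (p.1 : ℕ), (p.2 : ℕ), 1])
      (3 * (Real.exp 1 ^ 2 / 2 - 2 * Real.exp 1 + 5 / 2)) := by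
    refine hs_congr h2 (fun p => ?_) rfl
    obtain ⟨a, b⟩ := p
    have ha : (a.natPred + 1 : ℕ) = a := PNat.natPred_add_one a
    have hb : (b.natPred + 1 : ℕ) = b := PNat.natPred_add_one b
    simp only [Function.comp, Equiv.prodCongr_apply, Prod.map, Equiv.pnatEquivNat_apply, ha, hb]
    have ha' : ((a.natPred : ℝ) + 1) = a := by exact_mod_cast ha
    have hb' : ((b.natPred : ℝ) + 1) = b := by exact_mod_cast hb
    rw [ha', hb']
    ring
  rw [h3.tsum_eq]
  have he : 8 * Real.exp 1 - 21 ≠ 0 := by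
    have := Real.exp_one_gt_d9
    intro h
    linarith
  have he' : 6 * Real.exp 1 - 63 / 4 ≠ 0 := by
    intro h
    apply he
    linarith
  rw [div_eq_div_iff he' he]
  ring
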